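/- Let Ψ(u) = αu + βu² + ∫_{(0,∞)} (e^{−ux} − 1 + ux) π(dx) be a branching mechanism (α ∈ ℝ, β ≥ 0, ∫_{(0,∞)} min(x, x²) π(dx) < ∞), and let Φ be the unique solution of the initial value problem ∂_t Φ(t,q) = −Ψ(Φ(t,q)) for t > 0, q ∈ (0,∞), with Φ(0,q) = q. Then for each fixed t ≥ 0, the map q ↦ Φ(t,q) is a Bernstein function on (0,∞): it is infinitely differentiable, nonnegative, and (−1)^k ∂_q^{k+1} Φ(t,q) ≥ 0 for all q > 0 and all integers k ≥ 0. Moreover Φ(t, 0⁺) = 0 and 0 ≤ Φ(t,q) ≤ q e^{−αt} for all t ≥ 0, q > 0. -/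

import Mathlib

open MeasureTheory Set Filter

noncomputable section

/-!
Extend `Ψ` to a `C¹` function on the line with `Ψ' ≥ α` and `Ψ 0 = 0`. Two solutions differ by
`Φ(t,p) - Φ(t,q) = (p - q) exp(-∫₀ᵗ m)`, where `m` is the difference quotient of `Ψ` along them.
Comparison with the zero solution gives positivity and the bound `q e^{-αt}`; letting `p → q`
gives `∂_q Φ(t,q) = exp(-∫₀ᵗ Ψ'(Φ(s,q)) ds) =: E(t,q)`. Hence `-∂_q E = E · ∫₀ᵗ Ψ''(Φ) E ds`. As
`Ψ''` is a Laplace transform, it is completely monotone, and its composition with `Φ` is completely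
monotone up to any order for which `E = ∂_q Φ` is. So if `E(s,·)` is completely monotone up to
order `n` for all `s`, the right-hand side is too, and `E` is so up to order `n + 1`.
-/

open ProbabilityTheory
open scoped Topology ContDiff Interval

section ParametricIntegrals

variable {E : Type*} [NormedAddCommGroup E] [NormedSpace ℝ E]

lemma continuousOn_parametric_primitive {Y : Type*} [TopologicalSpace Y]
    [FirstCountableTopology Y] {V : Set Y} {a : ℝ} {h : ℝ → Y → E}
    (hh : ContinuousOn (fun p : ℝ × Y => h p.1 p.2) (Ici a ×ˢ V)) :
    ContinuousOn (fun p : ℝ × Y => ∫ s in a..p.1, h s p.2) (Ici a ×ˢ V) := by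
  have h_cont : Continuous fun p : V × ℝ => h (max p.2 a) p.1 :=
    hh.comp_continuous (f := fun p : V × ℝ => (max p.2 a, (p.1 : Y))) (by fun_prop)
      fun p => ⟨le_max_right p.2 a, p.1.2⟩
  have h_primitive := intervalIntegral.continuous_parametric_primitive_of_continuous
    (μ := volume) (f := fun (y : V) s => h (max s a) y) (a₀ := a) h_cont
  rw [continuousOn_iff_continuous_domRestrict]
  refine (h_primitive.comp (Continuous.prodMk
    (f := fun p : ↥(Ici a ×ˢ V) => (⟨p.1.2, p.2.2⟩ : V)) (g := fun p => p.1.1)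
    (by fun_prop) (by fun_prop))).congr ?_
  rintro ⟨⟨t, y⟩, ht, hy⟩
  refine intervalIntegral.integral_congr fun s hs => ?_
  rw [uIcc_of_le ht] at hs
  simp only [max_eq_left hs.1]

lemma hasDerivAt_intervalIntegral_of_continuousOn {U : Set ℝ} (hU : IsOpen U) {a b q : ℝ}
    (hq : q ∈ U) {h h' : ℝ → ℝ → E}
    (hh : ContinuousOn (fun p : ℝ × ℝ => h p.1 p.2) ([[a, b]] ×ˢ U))
    (hh' : ContinuousOn (fun p : ℝ × ℝ => h' p.1 p.2) ([[a, b]] ×ˢ U))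
    (hderiv : ∀ s ∈ [[a, b]], ∀ p ∈ U, HasDerivAt (h s) (h' s p) p) :
    HasDerivAt (fun p => ∫ s in a..b, h s p) (∫ s in a..b, h' s q) q := by
  have integrable_slice {k : ℝ → ℝ → E}
      (hk : ContinuousOn (fun p : ℝ × ℝ => k p.1 p.2) ([[a, b]] ×ˢ U)) {p : ℝ} (hp : p ∈ U) :
      IntervalIntegrable (fun s => k s p) volume a b :=
    (hk.comp (f := fun s : ℝ => (s, p)) (by fun_prop) fun s hs => ⟨hs, hp⟩).intervalIntegrable
  obtain ⟨K, hK, hKU, hK_compact⟩ := local_compact_nhds (hU.mem_nhds hq)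
  obtain ⟨C, hC⟩ := (isCompact_uIcc.prod hK_compact).exists_bound_of_continuousOn
    (hh'.mono (prod_mono_right hKU))
  refine (intervalIntegral.hasDerivAt_integral_of_dominated_loc_of_deriv_le
    (F := fun p s => h s p) (F' := fun p s => h' s p) (bound := fun _ => C) hK ?_
    (integrable_slice hh hq) (integrable_slice hh' hq).def'.aestronglyMeasurable ?_
    intervalIntegrable_const ?_).2
  · filter_upwards [hU.mem_nhds hq] with p hp
    exact (integrable_slice hh hp).def'.aestronglyMeasurable
  · exact .of_forall fun s hs p hp => hC (s, p) ⟨uIoc_subset_uIcc hs, hp⟩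
  · exact .of_forall fun s hs p hp => hderiv s (uIoc_subset_uIcc hs) p (hKU hp)

end ParametricIntegrals

section CompletelyMonotone

/-- `f` is completely monotone on `(0, ∞)`; its values elsewhere are irrelevant. -/
structure CompletelyMonotone (f : ℝ → ℝ) : Prop where
  contDiffOn : ContDiffOn ℝ ∞ f (Ioi 0)
  iteratedDeriv_nonneg : ∀ n : ℕ, ∀ u : ℝ, 0 < u → 0 ≤ (-1) ^ n * iteratedDeriv n f u

/-- `f` is a Bernstein function on `(0, ∞)`; its values elsewhere are irrelevant. -/
structure IsBernstein (f : ℝ → ℝ) : Prop where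
  contDiffOn : ContDiffOn ℝ ∞ f (Ioi 0)
  nonneg : ∀ u : ℝ, 0 < u → 0 ≤ f u
  iteratedDeriv_nonneg : ∀ k : ℕ, ∀ u : ℝ, 0 < u → 0 ≤ (-1) ^ k * iteratedDeriv (k + 1) f u

lemma contDiffOn_infty_of_hasDerivAt {U : Set ℝ} (hU : IsOpen U) {f f' : ℝ → ℝ}
    (hderiv : ∀ u ∈ U, HasDerivAt f (f' u) u) (hf' : ContDiffOn ℝ ∞ f' U) :
    ContDiffOn ℝ ∞ f U :=
  (contDiffOn_infty_iff_deriv_of_isOpen hU).2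
    ⟨fun u hu => (hderiv u hu).differentiableAt.differentiableWithinAt,
      hf'.congr fun u hu => (hderiv u hu).deriv⟩

lemma iteratedDeriv_succ_eq_of_hasDerivAt {U : Set ℝ} (hU : IsOpen U) {f f' : ℝ → ℝ}
    (hderiv : ∀ u ∈ U, HasDerivAt f (f' u) u) (n : ℕ) {u : ℝ} (hu : u ∈ U) :
    iteratedDeriv (n + 1) f u = iteratedDeriv n f' u := by
  have h_eqOn : EqOn (deriv f) f' U := fun v hv => (hderiv v hv).deriv
  rw [iteratedDeriv_succ', h_eqOn.iteratedDeriv_of_isOpen hU n hu]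

lemma IsBernstein.of_hasDerivAt {f f' : ℝ → ℝ} (hf : ∀ u : ℝ, 0 < u → 0 ≤ f u)
    (hderiv : ∀ u : ℝ, 0 < u → HasDerivAt f (f' u) u) (hf' : CompletelyMonotone f') :
    IsBernstein f where
  contDiffOn := contDiffOn_infty_of_hasDerivAt isOpen_Ioi hderiv hf'.contDiffOn
  nonneg := hf
  iteratedDeriv_nonneg k u hu := by
    rw [iteratedDeriv_succ_eq_of_hasDerivAt isOpen_Ioi hderiv k hu]
    exact hf'.iteratedDeriv_nonneg k u hu

namespace CompletelyMonotone

variable {f : ℝ → ℝ} (hf : CompletelyMonotone f)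
include hf

lemma nonneg {u : ℝ} (hu : 0 < u) : 0 ≤ f u := by
  simpa using hf.iteratedDeriv_nonneg 0 u hu

lemma neg_deriv : CompletelyMonotone fun u => -deriv f u where
  contDiffOn := ((contDiffOn_infty_iff_deriv_of_isOpen isOpen_Ioi).1 hf.contDiffOn).2.neg
  iteratedDeriv_nonneg n u hu := by
    have h_succ := hf.iteratedDeriv_nonneg (n + 1) u hu
    rw [iteratedDeriv_succ'] at h_succ
    rwa [iteratedDeriv_fun_neg, mul_neg, ← neg_mul, ← mul_neg_one, ← pow_succ]

lemma hasDerivAt {u : ℝ} (hu : 0 < u) : HasDerivAt f (deriv f u) u :=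
  ((hf.contDiffOn.differentiableOn (by simp)).differentiableAt (Ioi_mem_nhds hu)).hasDerivAt

end CompletelyMonotone

lemma completelyMonotone_mgf_neg {α : Type*} [MeasurableSpace α] {μ : Measure α} {X : α → ℝ}
    (hX : 0 ≤ᵐ[μ] X) (h_int : ∀ u : ℝ, 0 < u → Integrable (fun x => Real.exp (-u * X x)) μ) :
    CompletelyMonotone fun u => mgf X μ (-u) := by
  have h_mem {u : ℝ} (hu : 0 < u) : -u ∈ interior (integrableExpSet X μ) := by
    refine interior_maximal (fun v (hv : v < 0) => ?_) isOpen_Iio (neg_lt_zero.2 hu)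
    simpa only [neg_neg] using! h_int (-v) (neg_pos.2 hv)
  refine ⟨fun u hu => ?_, fun n u hu => ?_⟩
  · exact ((analyticAt_mgf (h_mem hu)).contDiffAt.comp u contDiffAt_id.neg).contDiffWithinAt
  · have h_deriv : (-1) ^ n * iteratedDeriv n (fun u => mgf X μ (-u)) u
        = ∫ x, X x ^ n * Real.exp (-u * X x) ∂μ := by
      rw [iteratedDeriv_comp_neg, iteratedDeriv_mgf (h_mem hu), smul_eq_mul, ← mul_assoc,
        ← mul_pow, neg_one_mul, neg_neg, one_pow, one_mul]
    rw [h_deriv]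
    refine integral_nonneg_of_ae ?_
    filter_upwards [hX] with x hx using mul_nonneg (pow_nonneg hx n) (Real.exp_pos _).le

end CompletelyMonotone

section CompletelyMonotoneFamilies

variable {X : Type*} [TopologicalSpace X] {S : Set X} {n : ℕ} {h k : X → ℝ → ℝ}

/-- `CMFamily S n h` says that the functions `h s` on `(0, ∞)`, for `s ∈ S`, are completely
monotone up to order `n`, with derivatives of orders `≤ n` jointly continuous on `S × (0, ∞)`.
In `succ` the function `h'` is minus the derivative of `h`, so that it is nonnegative again. -/
inductive CMFamily (S : Set X) : ℕ → (X → ℝ → ℝ) → Prop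
  | zero {h : X → ℝ → ℝ} (nonneg : ∀ s ∈ S, ∀ q : ℝ, 0 < q → 0 ≤ h s q)
      (continuousOn : ContinuousOn (fun p : X × ℝ => h p.1 p.2) (S ×ˢ Ioi 0)) : CMFamily S 0 h
  | succ {n : ℕ} {h h' : X → ℝ → ℝ} (order_zero : CMFamily S 0 h)
      (hasDerivAt : ∀ s ∈ S, ∀ q : ℝ, 0 < q → HasDerivAt (h s) (-h' s q) q)
      (order_n : CMFamily S n h') : CMFamily S (n + 1) h

namespace CMFamily

lemma order_zero (hh : CMFamily S n h) : CMFamily S 0 h := by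
  cases hh with
  | zero nonneg continuousOn => exact .zero nonneg continuousOn
  | succ order_zero _ _ => exact order_zero

lemma nonneg (hh : CMFamily S n h) : ∀ s ∈ S, ∀ q : ℝ, 0 < q → 0 ≤ h s q := by
  cases hh.order_zero with
  | zero nonneg _ => exact nonneg

lemma continuousOn (hh : CMFamily S n h) :
    ContinuousOn (fun p : X × ℝ => h p.1 p.2) (S ×ˢ Ioi 0) := by
  cases hh.order_zero with
  | zero _ continuousOn => exact continuousOn

lemma of_succ (hh : CMFamily S (n + 1) h) : CMFamily S n h := by
  induction n generalizing h with
  | zero => exact hh.order_zero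
  | succ n ih =>
    cases hh with
    | succ h₀ h_deriv hh' => exact .succ h₀ h_deriv (ih hh')

lemma add (hh : CMFamily S n h) (hk : CMFamily S n k) :
    CMFamily S n fun s q => h s q + k s q := by
  have order_zero_add {m : ℕ} {h k : X → ℝ → ℝ} (hh : CMFamily S m h) (hk : CMFamily S m k) :
      CMFamily S 0 fun s q => h s q + k s q :=
    .zero (fun s hs q hq => add_nonneg (hh.nonneg s hs q hq) (hk.nonneg s hs q hq))
      (hh.continuousOn.add hk.continuousOn)
  induction n generalizing h k with
  | zero => exact order_zero_add hh hk
  | succ n ih =>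
    cases hh with | succ h₀ h_deriv hh' =>
    cases hk with | succ k₀ k_deriv hk' =>
    refine .succ (order_zero_add h₀ k₀) (fun s hs q hq => ?_) (ih hh' hk')
    exact ((h_deriv s hs q hq).add (k_deriv s hs q hq)).congr_deriv (by ring)

lemma mul (hh : CMFamily S n h) (hk : CMFamily S n k) :
    CMFamily S n fun s q => h s q * k s q := by
  have order_zero_mul {m : ℕ} {h k : X → ℝ → ℝ} (hh : CMFamily S m h) (hk : CMFamily S m k) :
      CMFamily S 0 fun s q => h s q * k s q :=
    .zero (fun s hs q hq => mul_nonneg (hh.nonneg s hs q hq) (hk.nonneg s hs q hq))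
      (hh.continuousOn.mul hk.continuousOn)
  induction n generalizing h k with
  | zero => exact order_zero_mul hh hk
  | succ n ih =>
    have h_order_n := hh.of_succ
    have k_order_n := hk.of_succ
    cases hh with | succ h₀ h_deriv hh' =>
    cases hk with | succ k₀ k_deriv hk' =>
    refine .succ (order_zero_mul h₀ k₀) (fun s hs q hq => ?_)
      ((ih hh' k_order_n).add (ih h_order_n hk'))
    exact ((h_deriv s hs q hq).mul (k_deriv s hs q hq)).congr_deriv (by ring)

lemma comp_completelyMonotone (hh : CMFamily S n h) {f : ℝ → ℝ} (hf : CompletelyMonotone f)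
    {Φ : X → ℝ → ℝ} (hΦ_pos : ∀ s ∈ S, ∀ q : ℝ, 0 < q → 0 < Φ s q)
    (hΦ_cont : ContinuousOn (fun p : X × ℝ => Φ p.1 p.2) (S ×ˢ Ioi 0))
    (hΦ_deriv : ∀ s ∈ S, ∀ q : ℝ, 0 < q → HasDerivAt (Φ s) (h s q) q) :
    CMFamily S n fun s q => f (Φ s q) := by
  have order_zero_comp {f : ℝ → ℝ} (hf : CompletelyMonotone f) :
      CMFamily S 0 fun s q => f (Φ s q) :=
    .zero (fun s hs q hq => hf.nonneg (hΦ_pos s hs q hq))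
      (hf.contDiffOn.continuousOn.comp hΦ_cont fun p hp => hΦ_pos p.1 hp.1 p.2 hp.2)
  induction n generalizing f with
  | zero => exact order_zero_comp hf
  | succ n ih =>
    refine .succ (order_zero_comp hf) (fun s hs q hq => ?_)
      ((ih hh.of_succ hf.neg_deriv).mul hh.of_succ)
    exact ((hf.hasDerivAt (hΦ_pos s hs q hq)).comp q (hΦ_deriv s hs q hq)).congr_deriv (by ring)

lemma intervalIntegral {a : ℝ} {h : ℝ → ℝ → ℝ} (hh : CMFamily (Ici a) n h) :
    CMFamily (Ici a) n fun t q => ∫ s in a..t, h s q := by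
  have order_zero_integral {m : ℕ} {h : ℝ → ℝ → ℝ} (hh : CMFamily (Ici a) m h) :
      CMFamily (Ici a) 0 fun t q => ∫ s in a..t, h s q :=
    .zero (fun t ht q hq => intervalIntegral.integral_nonneg ht
      fun s hs => hh.nonneg s hs.1 q hq) (continuousOn_parametric_primitive hh.continuousOn)
  induction n generalizing h with
  | zero => exact order_zero_integral hh
  | succ n ih =>
    cases hh with | succ h₀ h_deriv hh' =>
    refine .succ (order_zero_integral h₀) (fun t ht q hq => ?_) (ih hh')
    have h_subset : [[a, t]] ⊆ Ici a := by
      rw [uIcc_of_le ht]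
      exact Icc_subset_Ici_self
    exact (hasDerivAt_intervalIntegral_of_continuousOn isOpen_Ioi hq
      (h₀.continuousOn.mono (prod_mono_left h_subset))
      (hh'.continuousOn.mono (prod_mono_left h_subset)).neg
      fun s hs p hp => h_deriv s (h_subset hs) p hp).congr_deriv (by simp)

lemma contDiffOn {s : X} (hs : s ∈ S) (hh : CMFamily S n h) : ContDiffOn ℝ n (h s) (Ioi 0) := by
  induction n generalizing h with
  | zero =>
    refine contDiffOn_zero.2 (hh.continuousOn.comp (f := fun q : ℝ => (s, q)) (by fun_prop) ?_)
    exact fun q hq => ⟨hs, hq⟩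
  | succ n ih =>
    cases hh with | succ _ h_deriv hh' =>
    rw [Nat.cast_add, Nat.cast_one, contDiffOn_succ_iff_deriv_of_isOpen isOpen_Ioi]
    refine ⟨fun q hq => (h_deriv s hs q hq).differentiableAt.differentiableWithinAt, by simp, ?_⟩
    exact (ih hh').neg.congr fun q hq => (h_deriv s hs q hq).deriv

lemma iteratedDeriv_nonneg {s : X} (hs : s ∈ S) (hh : CMFamily S n h) {q : ℝ} (hq : 0 < q) :
    0 ≤ (-1) ^ n * iteratedDeriv n (h s) q := by
  induction n generalizing h with
  | zero => simpa using hh.nonneg s hs q hq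
  | succ n ih =>
    cases hh with | succ _ h_deriv hh' =>
    rw [iteratedDeriv_succ_eq_of_hasDerivAt isOpen_Ioi (h_deriv s hs) n hq,
      iteratedDeriv_fun_neg, pow_succ, mul_neg_one, neg_mul_neg]
    exact ih hh'

lemma completelyMonotone (hh : ∀ n, CMFamily S n h) {s : X} (hs : s ∈ S) :
    CompletelyMonotone (h s) where
  contDiffOn := contDiffOn_infty.2 fun n => (hh n).contDiffOn hs
  iteratedDeriv_nonneg n _ hq := (hh n).iteratedDeriv_nonneg hs hq

end CMFamily
end CompletelyMonotoneFamilies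

section Comparison

variable {F g : ℝ → ℝ} {α T : ℝ} {y z : ℝ → ℝ}

lemma eq_mul_exp_neg_integral_of_hasDerivAt {a b : ℝ} (hab : a ≤ b) {m : ℝ → ℝ}
    (hy : ContinuousOn y (Icc a b)) (hm : ContinuousOn m (Icc a b))
    (hderiv : ∀ s ∈ Ioo a b, HasDerivAt y (-(m s * y s)) s) :
    y b = y a * Real.exp (-∫ s in a..b, m s) := by
  have hm_int : IntervalIntegrable m volume a b := hm.intervalIntegrable_of_Icc hab
  have primitive_cont : ContinuousOn (fun s => ∫ r in a..s, m r) (Icc a b) := by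
    rw [← uIcc_of_le hab] at hm ⊢
    exact intervalIntegral.continuousOn_primitive_interval hm.integrableOn_uIcc
  have primitive_deriv {s : ℝ} (hs : s ∈ Ioo a b) :
      HasDerivAt (fun s => ∫ r in a..s, m r) (m s) s :=
    intervalIntegral.integral_hasDerivAt_right
      (hm_int.mono_set (uIcc_subset_uIcc_left (uIcc_of_le hab ▸ Ioo_subset_Icc_self hs)))
      ((hm.mono Ioo_subset_Icc_self).stronglyMeasurableAtFilter isOpen_Ioo s hs)
      (hm.continuousAt (Icc_mem_nhds hs.1 hs.2))
  have h_const : ∀ s ∈ Ioo a b,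
      HasDerivAt (fun s => y s * Real.exp (∫ r in a..s, m r)) 0 s := fun s hs =>
    ((hderiv s hs).mul (primitive_deriv hs).exp).congr_deriv (by ring)
  have h_eq := intervalIntegral.integral_eq_sub_of_hasDerivAt_of_le hab
    (hy.mul primitive_cont.rexp) h_const intervalIntegrable_const
  simp only [Pi.mul_apply, intervalIntegral.integral_zero, intervalIntegral.integral_same,
    Real.exp_zero, mul_one, eq_comm (a := (0 : ℝ)), sub_eq_zero] at h_eq
  rw [← h_eq, mul_assoc, ← Real.exp_add, add_neg_cancel, Real.exp_zero, mul_one]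

/-- The mean of `g` over the segment from `a` to `b`: if `g` is the derivative of `F`, this is the
difference quotient of `F` at `a` and `b`, in a form that is continuous across the diagonal. -/
def segmentAverage (g : ℝ → ℝ) (a b : ℝ) : ℝ := ∫ θ in (0 : ℝ)..1, g (a + (b - a) * θ)

lemma segmentAverage_self (g : ℝ → ℝ) (a : ℝ) : segmentAverage g a a = g a := by
  simp [segmentAverage]

lemma continuous_segmentAverage (hg : Continuous g) :
    Continuous fun p : ℝ × ℝ => segmentAverage g p.1 p.2 :=
  intervalIntegral.continuous_parametric_intervalIntegral_of_continuous'
    (f := fun (p : ℝ × ℝ) θ => g (p.1 + (p.2 - p.1) * θ)) (by fun_prop) 0 1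

lemma le_segmentAverage (hg : Continuous g) (hα : ∀ u, α ≤ g u) (a b : ℝ) :
    α ≤ segmentAverage g a b := by
  have h_le := intervalIntegral.integral_mono_on (μ := volume) zero_le_one
    intervalIntegrable_const (Continuous.intervalIntegrable (by fun_prop) _ _)
    fun θ _ => hα (a + (b - a) * θ)
  simpa [segmentAverage] using h_le

lemma segmentAverage_mul_sub (hg : Continuous g) (hF : ∀ u, HasDerivAt F (g u) u) (a b : ℝ) :
    segmentAverage g a b * (b - a) = F b - F a := by
  rw [segmentAverage, mul_comm, intervalIntegral.mul_integral_comp_add_mul,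
    intervalIntegral.integral_eq_sub_of_hasDerivAt (fun u _ => hF u) (hg.intervalIntegrable _ _)]
  simp

lemma sub_eq_sub_mul_exp_of_hasDerivAt_neg (hg : Continuous g) (hF : ∀ u, HasDerivAt F (g u) u)
    (hT : 0 ≤ T) (hy : ContinuousOn y (Icc 0 T)) (hz : ContinuousOn z (Icc 0 T))
    (hy' : ∀ s ∈ Ioo 0 T, HasDerivAt y (-F (y s)) s)
    (hz' : ∀ s ∈ Ioo 0 T, HasDerivAt z (-F (z s)) s) :
    y T - z T = (y 0 - z 0) * Real.exp (-∫ s in (0 : ℝ)..T, segmentAverage g (z s) (y s)) :=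
  eq_mul_exp_neg_integral_of_hasDerivAt hT (hy.sub hz)
    ((continuous_segmentAverage hg).comp_continuousOn (hz.prodMk hy)) fun s hs =>
      ((hy' s hs).sub (hz' s hs)).congr_deriv (by
        rw [Pi.sub_apply, segmentAverage_mul_sub hg hF]
        ring)

lemma exp_neg_integral_segmentAverage_le (hg : Continuous g) (hα : ∀ u, α ≤ g u) (hT : 0 ≤ T)
    (hy : ContinuousOn y (Icc 0 T)) (hz : ContinuousOn z (Icc 0 T)) :
    Real.exp (-∫ s in (0 : ℝ)..T, segmentAverage g (z s) (y s)) ≤ Real.exp (-(α * T)) := by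
  have h_int : IntervalIntegrable (fun s => segmentAverage g (z s) (y s)) volume 0 T :=
    ((continuous_segmentAverage hg).comp_continuousOn (hz.prodMk hy)).intervalIntegrable_of_Icc hT
  have h_le := intervalIntegral.integral_mono_on hT intervalIntegrable_const h_int
    fun s _ => le_segmentAverage hg hα (z s) (y s)
  rw [intervalIntegral.integral_const, sub_zero, smul_eq_mul, mul_comm] at h_le
  exact Real.exp_le_exp.2 (neg_le_neg h_le)

lemma pos_of_forall_pos_before (hy : ContinuousOn y (Ici 0))
    (h_step : ∀ T, 0 ≤ T → (∀ s ∈ Ico 0 T, 0 < y s) → 0 < y T) (hT : 0 ≤ T) : 0 < y T := by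
  by_contra! hT_nonpos
  have h_compact : IsCompact (Icc 0 T ∩ y ⁻¹' Iic 0) :=
    isCompact_Icc.of_isClosed_subset ((hy.mono Icc_subset_Ici_self).preimage_isClosed_of_isClosed
      isClosed_Icc isClosed_Iic) inter_subset_left
  obtain ⟨τ, ⟨hτ, hτ_nonpos⟩, hτ_least⟩ :=
    h_compact.exists_isLeast ⟨T, ⟨hT, le_rfl⟩, hT_nonpos⟩
  refine not_lt.2 hτ_nonpos (h_step τ hτ.1 fun s hs => ?_)
  by_contra! hs_nonpos
  exact not_le.2 hs.2 (hτ_least ⟨⟨hs.1, hs.2.le.trans hτ.2⟩, hs_nonpos⟩)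

end Comparison

section BackwardFlow

/-- `Φ t q` is the value at time `t ≥ 0` of a solution of `y' = -F y` started at `q > 0`. The
equation is only imposed while the solution stays in `(0, ∞)`, the domain of a branching
mechanism. -/
structure IsBackwardFlow (F : ℝ → ℝ) (Φ : ℝ → ℝ → ℝ) : Prop where
  continuousOn : ∀ q, 0 < q → ContinuousOn (fun t => Φ t q) (Ici 0)
  initial : ∀ q, 0 < q → Φ 0 q = q
  hasDerivAt : ∀ q, 0 < q → ∀ t, 0 < t → 0 < Φ t q → HasDerivAt (fun s => Φ s q) (-F (Φ t q)) t

/-- The derivative of `Φ t q` in `q` for a solution `Φ` of `∂ₜΦ = -F Φ` with `F' = g`: the solution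
of the linearized equation `∂ₜv = -g(Φ) v` started at `1`. -/
def linearizedFlow (g : ℝ → ℝ) (Φ : ℝ → ℝ → ℝ) (t q : ℝ) : ℝ :=
  Real.exp (-∫ s in (0 : ℝ)..t, g (Φ s q))

namespace IsBackwardFlow

variable {F g : ℝ → ℝ} {Φ : ℝ → ℝ → ℝ} {α t q : ℝ} (hΦ : IsBackwardFlow F Φ)
include hΦ

lemma continuousOn_Icc (hq : 0 < q) (T : ℝ) : ContinuousOn (fun t => Φ t q) (Icc 0 T) :=
  (hΦ.continuousOn q hq).mono Icc_subset_Ici_self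

variable (hg : Continuous g) (hF : ∀ u, HasDerivAt F (g u) u) (hF₀ : F 0 = 0)
include hg hF hF₀

lemma eq_mul_exp (hq : 0 < q) (ht : 0 ≤ t) (h_pos : ∀ s ∈ Ico 0 t, 0 < Φ s q) :
    Φ t q = q * Real.exp (-∫ s in (0 : ℝ)..t, segmentAverage g 0 (Φ s q)) := by
  have h_sub := sub_eq_sub_mul_exp_of_hasDerivAt_neg (z := fun _ => 0) hg hF ht
    (hΦ.continuousOn_Icc hq t) continuousOn_const
    (fun s hs => hΦ.hasDerivAt q hq s hs.1 (h_pos s (Ioo_subset_Ico_self hs)))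
    fun s _ => (hasDerivAt_const s 0).congr_deriv (by simp [hF₀])
  simpa only [sub_zero, hΦ.initial q hq] using h_sub

lemma pos (ht : 0 ≤ t) (hq : 0 < q) : 0 < Φ t q := by
  refine pos_of_forall_pos_before (y := fun s => Φ s q) (hΦ.continuousOn q hq)
    (fun T hT h_pos => ?_) ht
  rw [hΦ.eq_mul_exp hg hF hF₀ hq hT h_pos]
  positivity

lemma sub_eq (ht : 0 ≤ t) (hq : 0 < q) {p : ℝ} (hp : 0 < p) :
    Φ t p - Φ t q =
      (p - q) * Real.exp (-∫ s in (0 : ℝ)..t, segmentAverage g (Φ s q) (Φ s p)) := by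
  have h_ode {r : ℝ} (hr : 0 < r) : ∀ s ∈ Ioo 0 t, HasDerivAt (fun s => Φ s r) (-F (Φ s r)) s :=
    fun s hs => hΦ.hasDerivAt r hr s hs.1 (hΦ.pos hg hF hF₀ hs.1.le hr)
  have h_sub := sub_eq_sub_mul_exp_of_hasDerivAt_neg hg hF ht (hΦ.continuousOn_Icc hp t)
    (hΦ.continuousOn_Icc hq t) (h_ode hp) (h_ode hq)
  rwa [hΦ.initial p hp, hΦ.initial q hq] at h_sub

variable (hα : ∀ u, α ≤ g u)
include hα

lemma le_mul_exp (ht : 0 ≤ t) (hq : 0 < q) : Φ t q ≤ q * Real.exp (-(α * t)) := by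
  rw [hΦ.eq_mul_exp hg hF hF₀ hq ht fun s hs => hΦ.pos hg hF hF₀ hs.1 hq]
  exact mul_le_mul_of_nonneg_left (exp_neg_integral_segmentAverage_le hg hα ht
    (hΦ.continuousOn_Icc hq t) continuousOn_const) hq.le

lemma tendsto_zero (ht : 0 ≤ t) : Tendsto (Φ t) (𝓝[>] 0) (𝓝 0) := by
  have h_upper : Tendsto (fun q => q * Real.exp (-(α * t))) (𝓝[>] 0) (𝓝 0) := by
    have h_cont : Continuous fun q => q * Real.exp (-(α * t)) := by fun_prop
    simpa only [zero_mul] using (h_cont.tendsto 0).mono_left nhdsWithin_le_nhds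
  refine tendsto_of_tendsto_of_tendsto_of_le_of_le' tendsto_const_nhds h_upper ?_ ?_
  · filter_upwards [self_mem_nhdsWithin] with q hq using (hΦ.pos hg hF hF₀ ht hq).le
  · filter_upwards [self_mem_nhdsWithin] with q hq using hΦ.le_mul_exp hg hF hF₀ hα ht hq

lemma lipschitzOnWith (ht : 0 ≤ t) :
    LipschitzOnWith 1 (fun q => Real.exp (α * t) * Φ t q) (Ioi 0) := by
  refine LipschitzOnWith.of_dist_le_mul fun p hp q hq => ?_
  have h_exp_le := exp_neg_integral_segmentAverage_le hg hα ht (hΦ.continuousOn_Icc hp t)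
    (hΦ.continuousOn_Icc hq t)
  calc dist (Real.exp (α * t) * Φ t p) (Real.exp (α * t) * Φ t q)
      = |p - q| * (Real.exp (α * t) *
          Real.exp (-∫ s in (0 : ℝ)..t, segmentAverage g (Φ s q) (Φ s p))) := by
        rw [Real.dist_eq, ← mul_sub, hΦ.sub_eq hg hF hF₀ ht hq hp, abs_mul, abs_mul, Real.abs_exp,
          Real.abs_exp, mul_left_comm]
    _ ≤ |p - q| * (Real.exp (α * t) * Real.exp (-(α * t))) := by gcongr
    _ = ((1 : NNReal) : ℝ) * dist p q := by
        rw [← Real.exp_add, add_neg_cancel, Real.exp_zero, mul_one, NNReal.coe_one, one_mul,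
          Real.dist_eq]

lemma continuousOn_prod :
    ContinuousOn (fun p : ℝ × ℝ => Φ p.1 p.2) (Ici 0 ×ˢ Ioi 0) := by
  have h_scaled : ContinuousOn (fun p : ℝ × ℝ => Real.exp (α * p.1) * Φ p.1 p.2)
      (Ici 0 ×ˢ Ioi 0) :=
    continuousOn_prod_of_continuousOn_lipschitzOnWith' _ 1
      (fun t ht => hΦ.lipschitzOnWith hg hF hF₀ hα ht)
      fun q hq => ContinuousOn.mul (by fun_prop) (hΦ.continuousOn q hq)
  have h_unscale : ContinuousOn (fun p : ℝ × ℝ => Real.exp (-(α * p.1))) (Ici 0 ×ˢ Ioi 0) := by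
    fun_prop
  refine (h_unscale.mul h_scaled).congr fun p _ => ?_
  simp only [Pi.mul_apply, ← mul_assoc, ← Real.exp_add, neg_add_cancel, Real.exp_zero, one_mul]

lemma continuousOn_linearizedFlow :
    ContinuousOn (fun p : ℝ × ℝ => linearizedFlow g Φ p.1 p.2) (Ici 0 ×ˢ Ioi 0) :=
  (continuousOn_parametric_primitive (h := fun s q => g (Φ s q))
    (hg.comp_continuousOn (hΦ.continuousOn_prod hg hF hF₀ hα))).neg.rexp

lemma hasDerivAt_initialValue (ht : 0 ≤ t) (hq : 0 < q) :
    HasDerivAt (Φ t) (linearizedFlow g Φ t q) q := by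
  set slopeAt : ℝ → ℝ :=
    fun p => Real.exp (-∫ s in (0 : ℝ)..t, segmentAverage g (Φ s q) (Φ s p)) with slopeAt_def
  have slopeAt_cont : ContinuousAt slopeAt q := by
    have h_average : ContinuousOn (fun p : ℝ × ℝ => segmentAverage g (Φ p.1 q) (Φ p.1 p.2))
        (Ici 0 ×ˢ Ioi 0) :=
      (continuous_segmentAverage hg).comp_continuousOn
        (((hΦ.continuousOn q hq).comp continuousOn_fst fun p hp => hp.1).prodMk
          (hΦ.continuousOn_prod hg hF hF₀ hα))
    have h_slice := (continuousOn_parametric_primitive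
      (h := fun s p => segmentAverage g (Φ s q) (Φ s p)) h_average).neg.rexp.comp
      (f := fun p : ℝ => (t, p)) (by fun_prop) fun p (hp : p ∈ Ioi 0) => ⟨ht, hp⟩
    exact h_slice.continuousAt (Ioi_mem_nhds hq)
  have slopeAt_self : slopeAt q = linearizedFlow g Φ t q := by
    simp only [slopeAt_def, segmentAverage_self, linearizedFlow]
  rw [hasDerivAt_iff_tendsto_slope, ← slopeAt_self]
  refine (slopeAt_cont.tendsto.mono_left nhdsWithin_le_nhds).congr' ?_
  filter_upwards [self_mem_nhdsWithin, mem_nhdsWithin_of_mem_nhds (Ioi_mem_nhds hq)] with p hpq hp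
  rw [slope_def_field, hΦ.sub_eq hg hF hF₀ ht hq hp,
    mul_div_cancel_left₀ _ (sub_ne_zero.2 hpq)]

variable {c : ℝ → ℝ} (hc : CompletelyMonotone c) (hgc : ∀ u, 0 < u → HasDerivAt g (c u) u)
include hc hgc

lemma hasDerivAt_linearizedFlow (ht : 0 ≤ t) (hq : 0 < q) :
    HasDerivAt (linearizedFlow g Φ t) (-(linearizedFlow g Φ t q *
      ∫ s in (0 : ℝ)..t, c (Φ s q) * linearizedFlow g Φ s q)) q := by
  have h_subset : [[0, t]] ×ˢ Ioi 0 ⊆ Ici (0 : ℝ) ×ˢ Ioi (0 : ℝ) := by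
    rw [uIcc_of_le ht]
    exact prod_mono_left Icc_subset_Ici_self
  have hΦ_cont := hΦ.continuousOn_prod hg hF hF₀ hα
  have h_exponent := hasDerivAt_intervalIntegral_of_continuousOn isOpen_Ioi hq
    (h := fun s q => g (Φ s q)) (h' := fun s q => c (Φ s q) * linearizedFlow g Φ s q)
    ((hg.comp_continuousOn hΦ_cont).mono h_subset)
    (((hc.contDiffOn.continuousOn.comp hΦ_cont fun p hp => hΦ.pos hg hF hF₀ hp.1 hp.2).mul
      (hΦ.continuousOn_linearizedFlow hg hF hF₀ hα)).mono h_subset)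
    fun s hs p hp => by
      rw [uIcc_of_le ht] at hs
      exact (hgc _ (hΦ.pos hg hF hF₀ hs.1 hp)).comp p
        (hΦ.hasDerivAt_initialValue hg hF hF₀ hα hs.1 hp)
  exact h_exponent.neg.exp.congr_deriv (mul_neg _ _)

lemma cmFamily_linearizedFlow (n : ℕ) : CMFamily (Ici 0) n (linearizedFlow g Φ) := by
  have h_order_zero : CMFamily (Ici 0) 0 (linearizedFlow g Φ) :=
    .zero (fun _ _ _ _ => (Real.exp_pos _).le) (hΦ.continuousOn_linearizedFlow hg hF hF₀ hα)
  induction n with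
  | zero => exact h_order_zero
  | succ n ih =>
    have h_curvature : CMFamily (Ici 0) n fun s q => c (Φ s q) :=
      ih.comp_completelyMonotone hc (fun s hs q hq => hΦ.pos hg hF hF₀ hs hq)
        (hΦ.continuousOn_prod hg hF hF₀ hα)
        fun s hs q hq => hΦ.hasDerivAt_initialValue hg hF hF₀ hα hs hq
    exact .succ h_order_zero
      (fun s hs q hq => hΦ.hasDerivAt_linearizedFlow hg hF hF₀ hα hc hgc hs hq)
      (ih.mul (h_curvature.mul ih).intervalIntegral)

theorem isBernstein (ht : 0 ≤ t) : IsBernstein (Φ t) :=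
  .of_hasDerivAt (fun _ hq => (hΦ.pos hg hF hF₀ ht hq).le)
    (fun _ hq => hΦ.hasDerivAt_initialValue hg hF hF₀ hα ht hq)
    (CMFamily.completelyMonotone (hΦ.cmFamily_linearizedFlow hg hF hF₀ hα hc hgc) ht)

end IsBackwardFlow
end BackwardFlow

section BranchingMechanism

/-- The function `Ψ u = α u + β u² + ∫ (e^{-ux} - 1 + ux) μ(dx)` on `(0, ∞)`, extended to the line
by its tangent `α u` at the origin: the extension is `C¹`, so that solutions of `y' = -Ψ y` can be
compared with the zero solution. -/
def branchingMechanism (α β : ℝ) (μ : Measure ℝ) (u : ℝ) : ℝ :=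
  α * u + β * max u 0 ^ 2 + ∫ x, (Real.exp (-(max u 0 * x)) - 1 + max u 0 * x) ∂μ

/-- The derivative of `branchingMechanism α β μ`. -/
def branchingMechanismDeriv (α β : ℝ) (μ : Measure ℝ) (u : ℝ) : ℝ :=
  α + 2 * β * max u 0 + ∫ x, x * (1 - Real.exp (-(max u 0 * x))) ∂μ

/-- The measure whose Laplace transform is the second derivative
`2β + ∫ x² e^{-ux} μ(dx)` of the branching mechanism on `(0, ∞)`. -/
def branchingCurvatureMeasure (β : ℝ) (μ : Measure ℝ) : Measure ℝ :=
  ENNReal.ofReal (2 * β) • Measure.dirac 0 + μ.withDensity fun x => ENNReal.ofReal (x ^ 2)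

lemma hasDerivAt_comp_max_zero {f f' : ℝ → ℝ} (hf : ∀ u, HasDerivAt f (f' u) u)
    (hf' : Continuous f') (hf'₀ : f' 0 = 0) (u : ℝ) :
    HasDerivAt (fun v => f (max v 0)) (f' (max u 0)) u := by
  have hf_cont : Continuous f := continuous_iff_continuousAt.2 fun v => (hf v).continuousAt
  refine hasDerivAt_of_hasDerivAt_of_ne' (x := 0) (g := fun v => f' (max v 0)) (fun v hv => ?_)
    (by fun_prop) (by fun_prop) u
  rcases hv.lt_or_gt with hv | hv
  · rw [max_eq_right hv.le, hf'₀]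
    refine (hasDerivAt_const v (f 0)).congr_of_eventuallyEq ?_
    filter_upwards [Iio_mem_nhds hv] with w hw
    rw [max_eq_right (mem_Iio.1 hw).le]
  · rw [max_eq_left hv.le]
    refine (hf v).congr_of_eventuallyEq ?_
    filter_upwards [Ioi_mem_nhds hv] with w hw
    rw [max_eq_left (mem_Ioi.1 hw).le]

lemma hasDerivAt_exp_neg_mul_const (x u : ℝ) :
    HasDerivAt (fun u => Real.exp (-(u * x))) (-(x * Real.exp (-(u * x)))) u :=
  ((hasDerivAt_id u).mul_const x).neg.exp.congr_deriv (by simp [mul_comm])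

lemma mul_one_sub_exp_nonneg {u x : ℝ} (hu : 0 ≤ u) (hx : 0 ≤ x) :
    0 ≤ x * (1 - Real.exp (-(u * x))) :=
  mul_nonneg hx (sub_nonneg.2 (Real.exp_le_one_iff.2 (neg_nonpos.2 (mul_nonneg hu hx))))

lemma mul_one_sub_exp_le {u M x : ℝ} (hu : 0 ≤ u) (huM : u ≤ M) (hx : 0 ≤ x) :
    x * (1 - Real.exp (-(u * x))) ≤ (1 + M) * min x (x ^ 2) := by
  have h_exp := Real.add_one_le_exp (-(u * x))
  have h_exp_pos := Real.exp_pos (-(u * x))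
  have hM : 0 ≤ M := hu.trans huM
  rw [mul_min_of_nonneg _ _ (by positivity)]
  refine le_min ?_ ?_
  · calc x * (1 - Real.exp (-(u * x))) ≤ x * (1 + M) := by gcongr; linarith
      _ = (1 + M) * x := mul_comm _ _
  · calc x * (1 - Real.exp (-(u * x))) ≤ x * (u * x) := by gcongr; linarith
      _ = u * x ^ 2 := by ring
      _ ≤ (1 + M) * x ^ 2 := by gcongr; linarith

lemma sq_mul_exp_neg_le {a x : ℝ} (ha : 0 < a) (hx : 0 ≤ x) :
    x ^ 2 * Real.exp (-(a * x)) ≤ (1 + a⁻¹) * min x (x ^ 2) := by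
  have h_exp_le_one : Real.exp (-(a * x)) ≤ 1 :=
    Real.exp_le_one_iff.2 (neg_nonpos.2 (by positivity))
  have h_mul_exp_le : a * x * Real.exp (-(a * x)) ≤ 1 :=
    (Real.mul_exp_neg_le_exp_neg_one _).trans (Real.exp_le_one_iff.2 (by norm_num))
  have ha' : 0 < a⁻¹ := inv_pos.2 ha
  rw [mul_min_of_nonneg _ _ (by positivity)]
  refine le_min ?_ ?_
  · calc x ^ 2 * Real.exp (-(a * x)) = a⁻¹ * x * (a * x * Real.exp (-(a * x))) := by
          field_simp
      _ ≤ a⁻¹ * x * 1 := by gcongr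
      _ ≤ (1 + a⁻¹) * x := by linarith
  · calc x ^ 2 * Real.exp (-(a * x)) ≤ x ^ 2 * 1 := by gcongr
      _ ≤ (1 + a⁻¹) * x ^ 2 := by nlinarith [sq_nonneg x]

variable {α β : ℝ} {μ : Measure ℝ}

lemma branchingMechanism_zero (α β : ℝ) (μ : Measure ℝ) : branchingMechanism α β μ 0 = 0 := by
  simp [branchingMechanism]

lemma branchingMechanism_of_pos {u : ℝ} (hu : 0 < u) :
    branchingMechanism α β μ u
      = α * u + β * u ^ 2 + ∫ x, (Real.exp (-(u * x)) - 1 + u * x) ∂μ := by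
  simp only [branchingMechanism, max_eq_left hu.le]

variable (hμ : ∀ᵐ x ∂μ, 0 < x)
include hμ

lemma le_branchingMechanismDeriv (hβ : 0 ≤ β) (u : ℝ) : α ≤ branchingMechanismDeriv α β μ u := by
  have h_linear : 0 ≤ 2 * β * max u 0 := by positivity
  have h_integral : 0 ≤ ∫ x, x * (1 - Real.exp (-(max u 0 * x))) ∂μ := by
    refine integral_nonneg_of_ae ?_
    filter_upwards [hμ] with x hx using mul_one_sub_exp_nonneg (le_max_right u 0) hx.le
  rw [branchingMechanismDeriv]
  linarith

lemma ae_norm_mul_one_sub_exp_le (M : ℝ) : ∀ᵐ x ∂μ, ∀ u, 0 ≤ u → u ≤ M →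
    ‖x * (1 - Real.exp (-(u * x)))‖ ≤ (1 + M) * min x (x ^ 2) := by
  filter_upwards [hμ] with x hx u hu huM
  rw [Real.norm_of_nonneg (mul_one_sub_exp_nonneg hu hx.le)]
  exact mul_one_sub_exp_le hu huM hx.le

variable (hW : Integrable (fun x : ℝ => min x (x ^ 2)) μ)
include hW

lemma integrable_mul_one_sub_exp {u : ℝ} (hu : 0 ≤ u) :
    Integrable (fun x => x * (1 - Real.exp (-(u * x)))) μ := by
  refine (hW.const_mul (1 + u)).mono' (by fun_prop) ?_
  filter_upwards [ae_norm_mul_one_sub_exp_le hμ u] with x hx using hx u hu le_rfl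

lemma integrable_exp_sub_one_add {u : ℝ} (hu : 0 ≤ u) :
    Integrable (fun x => Real.exp (-(u * x)) - 1 + u * x) μ := by
  refine ((integrable_mul_one_sub_exp hμ hW hu).const_mul u).mono' (by fun_prop) ?_
  refine .of_forall fun x => ?_
  have h_nonneg : 0 ≤ Real.exp (-(u * x)) - 1 + u * x := by
    linarith [Real.add_one_le_exp (-(u * x))]
  have h_exp : (u * x + 1) * Real.exp (-(u * x)) ≤ 1 := by
    calc (u * x + 1) * Real.exp (-(u * x)) ≤ Real.exp (u * x) * Real.exp (-(u * x)) := by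
          gcongr
          exact Real.add_one_le_exp _
      _ = 1 := by rw [← Real.exp_add, add_neg_cancel, Real.exp_zero]
  rw [Real.norm_of_nonneg h_nonneg]
  linarith

lemma integrable_sq_mul_exp_neg {u : ℝ} (hu : 0 < u) :
    Integrable (fun x => x ^ 2 * Real.exp (-(u * x))) μ := by
  refine (hW.const_mul (1 + u⁻¹)).mono' (by fun_prop) ?_
  filter_upwards [hμ] with x hx
  rw [Real.norm_of_nonneg (by positivity)]
  exact sq_mul_exp_neg_le hu hx.le

lemma hasDerivAt_branchingMechanism (u : ℝ) :
    HasDerivAt (branchingMechanism α β μ) (branchingMechanismDeriv α β μ u) u := by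
  have h_quadratic : HasDerivAt (fun v => β * max v 0 ^ 2) (2 * β * max u 0) u :=
    hasDerivAt_comp_max_zero (f := fun v => β * v ^ 2) (f' := fun v => 2 * β * v)
      (fun v => ((hasDerivAt_pow 2 v).const_mul β).congr_deriv (by norm_num; ring))
      (by fun_prop) (mul_zero _) u
  have h_kernel (x v : ℝ) : HasDerivAt (fun v => Real.exp (-(max v 0 * x)) - 1 + max v 0 * x)
      (x * (1 - Real.exp (-(max v 0 * x)))) v :=
    hasDerivAt_comp_max_zero (f := fun v => Real.exp (-(v * x)) - 1 + v * x)
      (f' := fun v => x * (1 - Real.exp (-(v * x))))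
      (fun v => (((hasDerivAt_exp_neg_mul_const x v).sub_const 1).add
        ((hasDerivAt_id v).mul_const x)).congr_deriv (by ring)) (by fun_prop) (by simp) v
  have h_bound : ∀ᵐ x ∂μ, ∀ v ∈ Iio (max u 0 + 1),
      ‖x * (1 - Real.exp (-(max v 0 * x)))‖ ≤ (1 + (max u 0 + 1)) * min x (x ^ 2) := by
    filter_upwards [ae_norm_mul_one_sub_exp_le hμ (max u 0 + 1)] with x hx v hv
    exact hx _ (le_max_right v 0) (max_le (mem_Iio.1 hv).le (by positivity))
  have h_integral := (hasDerivAt_integral_of_dominated_loc_of_deriv_le (μ := μ)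
    (Iio_mem_nhds ((le_max_left u 0).trans_lt (lt_add_one _)))
    (.of_forall fun v => by fun_prop) (integrable_exp_sub_one_add hμ hW (le_max_right u 0))
    (by fun_prop) h_bound (hW.const_mul _) (.of_forall fun x v _ => h_kernel x v)).2
  exact ((((hasDerivAt_id u).const_mul α).add h_quadratic).add h_integral).congr_deriv
    (by simp only [branchingMechanismDeriv, mul_one])

lemma continuous_branchingMechanismDeriv : Continuous (branchingMechanismDeriv α β μ) := by
  have h_integral : Continuous fun u => ∫ x, x * (1 - Real.exp (-(max u 0 * x))) ∂μ := by
    refine continuous_iff_continuousAt.2 fun u => continuousAt_of_dominated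
      (bound := fun x => (1 + (max u 0 + 1)) * min x (x ^ 2)) (.of_forall fun _ => by fun_prop)
      ?_ (hW.const_mul _) (.of_forall fun _ => by fun_prop)
    filter_upwards [Iio_mem_nhds ((le_max_left u 0).trans_lt (lt_add_one _))] with v hv
    filter_upwards [ae_norm_mul_one_sub_exp_le hμ (max u 0 + 1)] with x hx
    exact hx _ (le_max_right v 0) (max_le (mem_Iio.1 hv).le (by positivity))
  exact Continuous.add (by fun_prop) h_integral

lemma integrable_exp_branchingCurvatureMeasure {u : ℝ} (hu : 0 < u) :
    Integrable (fun x => Real.exp (-u * x)) (branchingCurvatureMeasure β μ) := by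
  refine .add_measure ((integrable_dirac (by simp)).smul_measure ENNReal.ofReal_ne_top) ?_
  rw [integrable_withDensity_iff_integrable_smul' (by fun_prop) (by simp)]
  refine (integrable_sq_mul_exp_neg hμ hW hu).congr (.of_forall fun x => ?_)
  simp [ENNReal.toReal_ofReal (sq_nonneg x)]

lemma mgf_branchingCurvatureMeasure (hβ : 0 ≤ β) {u : ℝ} (hu : 0 < u) :
    mgf id (branchingCurvatureMeasure β μ) (-u)
      = 2 * β + ∫ x, x ^ 2 * Real.exp (-(u * x)) ∂μ := by
  have h_int := integrable_exp_branchingCurvatureMeasure (β := β) hμ hW hu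
  rw [branchingCurvatureMeasure, integrable_add_measure] at h_int
  rw [branchingCurvatureMeasure, mgf_add_measure (X := id) h_int.1 h_int.2, mgf_smul_measure,
    mgf_dirac', mgf, integral_withDensity_eq_integral_toReal_smul (by fun_prop) (by simp)]
  simp [ENNReal.toReal_ofReal, hβ, sq_nonneg]

lemma hasDerivAt_branchingMechanismDeriv (hβ : 0 ≤ β) {u : ℝ} (hu : 0 < u) :
    HasDerivAt (branchingMechanismDeriv α β μ)
      (mgf id (branchingCurvatureMeasure β μ) (-u)) u := by
  have h_bound : ∀ᵐ x ∂μ, ∀ v ∈ Ioi (u / 2),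
      ‖x ^ 2 * Real.exp (-(v * x))‖ ≤ x ^ 2 * Real.exp (-(u / 2 * x)) := by
    filter_upwards [hμ] with x hx v hv
    rw [Real.norm_of_nonneg (by positivity)]
    gcongr
    exact (mem_Ioi.1 hv).le
  have h_integral : HasDerivAt (fun v => ∫ x, x * (1 - Real.exp (-(v * x))) ∂μ)
      (∫ x, x ^ 2 * Real.exp (-(u * x)) ∂μ) u :=
    (hasDerivAt_integral_of_dominated_loc_of_deriv_le (Ioi_mem_nhds (half_lt_self hu))
      (.of_forall fun _ => by fun_prop) (integrable_mul_one_sub_exp hμ hW hu.le) (by fun_prop)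
      h_bound (integrable_sq_mul_exp_neg hμ hW (half_pos hu)) (.of_forall fun x v _ =>
        (((hasDerivAt_exp_neg_mul_const x v).const_sub 1).const_mul x).congr_deriv (by ring))).2
  rw [mgf_branchingCurvatureMeasure hμ hW hβ hu]
  refine (((((hasDerivAt_id u).const_mul (2 * β)).const_add α).add h_integral).congr_deriv
    (by rw [mul_one])).congr_of_eventuallyEq ?_
  filter_upwards [Ioi_mem_nhds hu] with v hv
  simp only [branchingMechanismDeriv, max_eq_left (mem_Ioi.1 hv).le, Pi.add_apply, id]

lemma completelyMonotone_mgf_branchingCurvatureMeasure :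
    CompletelyMonotone fun u => mgf id (branchingCurvatureMeasure β μ) (-u) := by
  refine completelyMonotone_mgf_neg ?_ fun u hu =>
    integrable_exp_branchingCurvatureMeasure hμ hW hu
  refine ae_add_measure_iff.2 ⟨Measure.ae_smul_measure ?_ _, ?_⟩
  · simp [ae_dirac_eq]
  · filter_upwards [(withDensity_absolutelyContinuous μ _).ae_le hμ] with x hx using hx.le

end BranchingMechanism

/-- for a branching mechanism `Ψ`, the solution `Φ(t,·)` of the
backward equation `∂_t Φ = -Ψ(Φ)`, `Φ(0,q) = q`, is a Bernstein function for
each fixed `t ≥ 0`, with `Φ(t,0⁺) = 0` and `0 ≤ Φ(t,q) ≤ q e^{-αt}`. -/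
theorem backward_flow_is_Bernstein
    (Ψ : ℝ → ℝ) (α β : ℝ) (π : Measure ℝ)
    (hβ : 0 ≤ β)
    (hπfin : ∫⁻ x in Ioi (0:ℝ), ENNReal.ofReal (min x (x ^ 2)) ∂π < ⊤)
    (hΨ : ∀ u : ℝ, 0 < u →
      Ψ u = α * u + β * u ^ 2 + ∫ x in Ioi (0:ℝ), (Real.exp (-(u * x)) - 1 + u * x) ∂π)
    (Φ : ℝ → ℝ → ℝ)
    (hΦcont : ∀ q : ℝ, 0 < q → ContinuousOn (fun t => Φ t q) (Ici 0))
    (hΦinit : ∀ q : ℝ, 0 < q → Φ 0 q = q)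
    (hΦode : ∀ q : ℝ, 0 < q → ∀ t : ℝ, 0 < t →
      HasDerivAt (fun s => Φ s q) (-Ψ (Φ t q)) t) :
    ∀ t : ℝ, 0 ≤ t →
      (∀ q : ℝ, 0 < q → ∀ n : ℕ, ContDiffAt ℝ n (fun p => Φ t p) q) ∧
      (∀ q : ℝ, 0 < q → 0 ≤ Φ t q) ∧
      (∀ k : ℕ, ∀ q : ℝ, 0 < q →
        0 ≤ (-1 : ℝ) ^ k * iteratedDeriv (k + 1) (fun p => Φ t p) q) ∧
      Tendsto (fun q => Φ t q) (nhdsWithin 0 (Ioi 0)) (nhds 0) ∧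
      (∀ q : ℝ, 0 < q → Φ t q ≤ q * Real.exp (-(α * t))) := by
  intro t ht
  set μ := π.restrict (Ioi 0)
  have hμ : ∀ᵐ x ∂μ, 0 < x := ae_restrict_mem measurableSet_Ioi
  have hW : Integrable (fun x : ℝ => min x (x ^ 2)) μ := by
    refine ⟨by fun_prop, (hasFiniteIntegral_iff_ofReal ?_).2 hπfin⟩
    filter_upwards [hμ] with x hx using le_min hx.le (sq_nonneg x)
  have hΦ : IsBackwardFlow (branchingMechanism α β μ) Φ :=
    ⟨hΦcont, hΦinit, fun q hq t ht h_pos => by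
      rw [branchingMechanism_of_pos h_pos, ← hΨ _ h_pos]
      exact hΦode q hq t ht⟩
  have hg := continuous_branchingMechanismDeriv (α := α) (β := β) hμ hW
  have hF := hasDerivAt_branchingMechanism (α := α) (β := β) hμ hW
  have hF₀ := branchingMechanism_zero α β μ
  have hα := le_branchingMechanismDeriv (α := α) hμ hβ
  have h_bernstein := hΦ.isBernstein hg hF hF₀ hα
    (completelyMonotone_mgf_branchingCurvatureMeasure hμ hW)
    (fun u hu => hasDerivAt_branchingMechanismDeriv hμ hW hβ hu) ht
  exact ⟨fun q hq n => (h_bernstein.contDiffOn.contDiffAt (Ioi_mem_nhds hq)).of_le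
      (mod_cast le_top), h_bernstein.nonneg, h_bernstein.iteratedDeriv_nonneg,
    hΦ.tendsto_zero hg hF hF₀ hα ht, fun q hq => hΦ.le_mul_exp hg hF hF₀ hα ht hq⟩
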